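/- Let n ≥ 1, let P be an n×n real matrix with eᵀP = eᵀ, let 0 < α < 1, let v ∈ ℝⁿ satisfy eᵀv = 1, and set A = αP + (1−α)v eᵀ. Let U be an orthogonal n×n real matrix whose first column equals ê = e/√n. Then the matrix B = UᵀAU satisfies: B₁₁ = 1; B₁ⱼ = 0 for all j ≥ 2; and Bᵢⱼ = α·(UᵀPU)ᵢⱼ for all i, j ≥ 2. That is, B = [[1, 0], [w₁, αT]] where T is the lower-right (n−1)×(n−1) block of UᵀPU. -/

import Mathlib

/-!
The vector `y = e` satisfies `yᵀ P = yᵀ` and `yᵀ v = 1`, so `yᵀ A = α yᵀ + (1 - α) yᵀ = yᵀ`. The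
first row of `Uᵀ` is a multiple of `yᵀ`, hence also a left eigenvector of `A` with eigenvalue `1`,
and the first row of `Uᵀ A U` is the first row of `Uᵀ U = 1`. The remaining columns of `U` are
orthogonal to `y`, so the rank-one term `v yᵀ U` vanishes off its first column.
-/

open Matrix

section RankOnePerturbation

variable {R m n : Type*} [CommSemiring R] [Fintype m]

theorem vecMul_add_vecMulVec_of_vecMul_eq_smul {M : Matrix m m R} {v y : m → R} {μ : R}
    (hM : y ᵥ* M = μ • y) : y ᵥ* (M + vecMulVec v y) = (μ + y ⬝ᵥ v) • y := by
  rw [vecMul_add, hM, vecMul_vecMulVec, add_smul]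

theorem mul_add_vecMulVec_mul_apply {l : Type*} (W : Matrix l m R) (M : Matrix m m R)
    (U : Matrix m n R) (v y : m → R) (i : l) (j : n) :
    (W * (M + vecMulVec v y) * U) i j = (W * M * U) i j + (W *ᵥ v) i * (y ᵥ* U) j := by
  rw [Matrix.mul_add, Matrix.add_mul, mul_vecMulVec, vecMulVec_mul, Matrix.add_apply,
    vecMulVec_apply]

variable [DecidableEq n] {W : Matrix n m R} {U : Matrix m n R} {k : n}

theorem row_mul_mul_of_row_vecMul_eq_smul {A : Matrix m m R} {μ : R} (hWU : W * U = 1)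
    (hA : W.row k ᵥ* A = μ • W.row k) : (W * A * U).row k = Pi.single k μ := by
  calc (W * A * U).row k = W.row k ᵥ* A ᵥ* U := rfl
    _ = μ • (W * U).row k := by rw [hA, smul_vecMul]; rfl
    _ = Pi.single k μ := by
      rw [hWU]
      ext j
      simp [one_apply, Pi.single_apply, eq_comm]

theorem vecMul_apply_eq_zero_of_row_eq_smul {y : m → R} {c : R} (hWU : W * U = 1)
    (hW : W.row k = c • y) {j : n} (hj : j ≠ k) : (y ᵥ* U) j = 0 := by
  have hrow : c • (y ᵥ* U) = (1 : Matrix n n R) k := by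
    rw [← smul_vecMul, ← hW, ← hWU]
    rfl
  have hk : c * (y ᵥ* U) k = 1 := by simpa using congrFun hrow k
  have hcj : c * (y ᵥ* U) j = 0 := by simpa [hj.symm] using congrFun hrow j
  exact (IsUnit.of_mul_eq_one _ hk).mul_right_eq_zero.mp hcj

end RankOnePerturbation

section GoogleMatrix

variable {R m n : Type*} [CommRing R]

/-- The Google matrix with link matrix `P`, damping factor `α` and personalization vector `v`.
The all-ones vector `e` of the usual definition is replaced by an arbitrary vector `y`. -/
def googleMatrix (α : R) (P : Matrix m m R) (v y : m → R) : Matrix m m R :=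
  α • P + (1 - α) • vecMulVec v y

theorem googleMatrix_eq_add_vecMulVec (α : R) (P : Matrix m m R) (v y : m → R) :
    googleMatrix α P v y = α • P + vecMulVec ((1 - α) • v) y := by
  rw [googleMatrix, smul_vecMulVec]

variable [Fintype m] {P : Matrix m m R} {v y : m → R}

theorem vecMul_googleMatrix (α : R) (hP : y ᵥ* P = y) (hv : y ⬝ᵥ v = 1) :
    y ᵥ* googleMatrix α P v y = y := by
  have hαP : y ᵥ* (α • P) = α • y := by rw [vecMul_smul, hP]
  rw [googleMatrix_eq_add_vecMulVec, vecMul_add_vecMulVec_of_vecMul_eq_smul hαP,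
    dotProduct_smul, hv, smul_eq_mul, mul_one, add_sub_cancel, one_smul]

variable [DecidableEq n] {W : Matrix n m R} {U : Matrix m n R} {k : n} {c : R}

theorem row_mul_googleMatrix_mul (α : R) (hP : y ᵥ* P = y) (hv : y ⬝ᵥ v = 1)
    (hWU : W * U = 1) (hW : W.row k = c • y) :
    (W * googleMatrix α P v y * U).row k = Pi.single k 1 := by
  apply row_mul_mul_of_row_vecMul_eq_smul hWU
  rw [hW, smul_vecMul, vecMul_googleMatrix α hP hv, one_smul]

theorem mul_googleMatrix_mul_apply_of_ne (α : R) (P : Matrix m m R) (v : m → R)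
    (hWU : W * U = 1) (hW : W.row k = c • y) (i : n) {j : n} (hj : j ≠ k) :
    (W * googleMatrix α P v y * U) i j = α * (W * P * U) i j := by
  rw [googleMatrix_eq_add_vecMulVec, mul_add_vecMulVec_mul_apply,
    vecMul_apply_eq_zero_of_row_eq_smul hWU hW hj, mul_zero, add_zero,
    Matrix.mul_smul, Matrix.smul_mul, Matrix.smul_apply, smul_eq_mul]

theorem google_similarity_block_form_general (α : R) (hP : y ᵥ* P = y) (hv : y ⬝ᵥ v = 1)
    (hWU : W * U = 1) (hW : W.row k = c • y) :
    (W * googleMatrix α P v y * U) k k = 1 ∧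
    (∀ j, j ≠ k → (W * googleMatrix α P v y * U) k j = 0) ∧
    (∀ i j, j ≠ k → (W * googleMatrix α P v y * U) i j = α * (W * P * U) i j) := by
  have hrow := row_mul_googleMatrix_mul α hP hv hWU hW
  exact ⟨(congrFun hrow k).trans (Pi.single_eq_same k 1),
    fun j hj => (congrFun hrow j).trans (Pi.single_eq_of_ne hj 1),
    fun i _ hj => mul_googleMatrix_mul_apply_of_ne α P v hWU hW i hj⟩

end GoogleMatrix

/-- With `A = α•P + (1-α)•v eᵀ` and `U` orthogonal with first column
`e/√n`, the matrix `B = UᵀAU` has `B₁₁ = 1`, `B₁ⱼ = 0` for `j ≥ 2`, and lower-right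
block equal to `α` times that of `UᵀPU`. -/
theorem google_similarity_block_form (n : ℕ) (hn : 1 ≤ n)
    (P U : Matrix (Fin n) (Fin n) ℝ)
    (hPcol : ∀ j, ∑ i, P i j = 1)
    (α : ℝ) (hα0 : 0 < α) (hα1 : α < 1)
    (v : Fin n → ℝ) (hvsum : ∑ i, v i = 1)
    (A : Matrix (Fin n) (Fin n) ℝ)
    (hA : A = α • P + (1 - α) • Matrix.vecMulVec v (fun _ => (1 : ℝ)))
    (hU : Uᵀ * U = 1)
    (hUcol : ∀ i : Fin n, U i ⟨0, hn⟩ = 1 / Real.sqrt n) :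
    (Uᵀ * A * U) ⟨0, hn⟩ ⟨0, hn⟩ = 1 ∧
    (∀ j : Fin n, j ≠ ⟨0, hn⟩ → (Uᵀ * A * U) ⟨0, hn⟩ j = 0) ∧
    (∀ i j : Fin n, i ≠ ⟨0, hn⟩ → j ≠ ⟨0, hn⟩ →
      (Uᵀ * A * U) i j = α * (Uᵀ * P * U) i j) := by
  have hP : (fun _ => 1) ᵥ* P = fun _ => 1 := by
    ext j
    simp [vecMul, dotProduct, hPcol]
  have hv : (fun _ => 1) ⬝ᵥ v = 1 := (one_dotProduct v).trans hvsum
  have hW : Uᵀ.row ⟨0, hn⟩ = (1 / Real.sqrt n) • fun _ => 1 := by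
    ext i
    simp [hUcol]
  obtain ⟨hdiag, hrow, hblock⟩ := google_similarity_block_form_general α hP hv hU hW
  subst hA
  exact ⟨hdiag, hrow, fun i j _ => hblock i j⟩
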